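/- Let n ≥ 1 and let f : ℝⁿ → ℝ be a nonnegative, continuous, compactly supported function with ∫_{ℝⁿ} f dx = 1, and let u(t,x) = ∫_{ℝⁿ} (4πt)^{-n/2} exp(-‖x-y‖²/(4t)) f(y) dy. Then the function t ↦ H(u(t)) = -∫_{ℝⁿ} u(t,x) log u(t,x) dx is twice differentiable on (0,∞) and satisfies the entropy differential inequality H''(t) + (2/n) H'(t)² ≤ 0 for all t > 0. -/

import Mathlib

open Real MeasureTheory

/-- The heat semigroup solution on `ℝⁿ` with initial datum `f`. -/
noncomputable def heatSol (n : ℕ) (f : EuclideanSpace ℝ (Fin n) → ℝ)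
    (t : ℝ) (x : EuclideanSpace ℝ (Fin n)) : ℝ :=
  ∫ y, (4 * π * t) ^ (-(n : ℝ) / 2) * Real.exp (-‖x - y‖ ^ 2 / (4 * t)) * f y

/-- The Boltzmann–Shannon entropy of the heat solution at time `t`. -/
noncomputable def shannonEntropy (n : ℕ) (f : EuclideanSpace ℝ (Fin n) → ℝ) (t : ℝ) : ℝ :=
  -∫ x, heatSol n f t x * Real.log (heatSol n f t x)

/-!
With `s = 1 / (4 t)` and `x = 2 t z`, completing the square factors the solution of the heat
equation with initial datum a probability measure `μ` as `γ_s(z) Z(s, z)` up to the Jacobian of the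
dilation, where `γ_s` is the heat kernel and `Z(s, z) = ∫ exp (⟨z, y⟩ - s |y|²) dμ(y)` is a positive
solution of the *backward* heat equation `∂ₛZ + ΔZ = 0`. Integrating by parts against `γ_s`, one has
`d/ds ∫ γ_s F = ∫ γ_s (∂ₛF + ΔF)`. Hence `L(s) = ∫ γ_s Z log Z` satisfies `L' = ∫ γ_s |∇Z|² / Z` and
`L'' = 2 ∫ γ_s Z |∇² log Z|²`.

The entropy is `H(t) = (n/2) log (4πt) + n/2 + m / (4t) - L(1 / (4t))` with `m = ∫ |y|² dμ`, and the
inequality `H'' + (2/n) H'² ≤ 0` becomes `(m - L')² ≤ (n/2) L''`. As `m = ∫ γ_s ΔZ`, the left side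
is `(∫ γ_s Z Δ log Z)²`, so this is the Cauchy–Schwarz inequality together with
`(Δ log Z)² ≤ n |∇² log Z|²`.
-/

open Function Metric Module
open scoped RealInnerProductSpace

section ExpGrowth

variable {V : Type*} [NormedAddCommGroup V]

/-- At most exponential growth in space and time, the class of integrands against the heat kernel.
The single constant `a` also absorbs multiplicative constants, since `1 ≤ 1 + s + ‖z‖`. -/
structure HasExpGrowth (F : ℝ → V → ℝ) : Prop where
  continuous : ∀ ⦃s⦄, 0 < s → Continuous (F s)
  bound : ∃ a, 0 ≤ a ∧ ∀ ⦃s⦄, 0 < s → ∀ z, |F s z| ≤ exp (a * (1 + s + ‖z‖))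

namespace HasExpGrowth

variable {F G : ℝ → V → ℝ}

lemma of_abs_le_mul_exp {C a : ℝ} (hF : ∀ ⦃s⦄, 0 < s → Continuous (F s))
    (h : ∀ ⦃s⦄, 0 < s → ∀ z, |F s z| ≤ C * exp (a * (1 + s + ‖z‖))) : HasExpGrowth F := by
  refine ⟨hF, |C| + |a|, by positivity, fun s hs z ↦ (h hs z).trans ?_⟩
  have hX : 1 ≤ 1 + s + ‖z‖ := by linarith [norm_nonneg z]
  have hC : C ≤ exp (|C| * (1 + s + ‖z‖)) :=
    calc C ≤ |C| * (1 + s + ‖z‖) := (le_abs_self C).trans (le_mul_of_one_le_right (abs_nonneg C) hX)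
      _ ≤ exp (|C| * (1 + s + ‖z‖)) := by linarith [add_one_le_exp (|C| * (1 + s + ‖z‖))]
  rw [add_mul, exp_add]
  gcongr
  exact le_abs_self a

lemma const (c : ℝ) : HasExpGrowth fun _ (_ : V) ↦ c :=
  of_abs_le_mul_exp (C := |c|) (a := 0) (fun _ _ ↦ continuous_const) (by simp)

lemma norm : HasExpGrowth fun _ (z : V) ↦ ‖z‖ :=
  of_abs_le_mul_exp (C := 1) (a := 1) (fun _ _ ↦ continuous_norm) fun s hs z ↦ by
    rw [abs_norm]
    linarith [add_one_le_exp (1 * (1 + s + ‖z‖))]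

lemma abs (hF : HasExpGrowth F) : HasExpGrowth fun s z ↦ |F s z| :=
  ⟨fun _ hs ↦ (hF.continuous hs).abs, by simpa only [abs_abs] using hF.bound⟩

lemma add (hF : HasExpGrowth F) (hG : HasExpGrowth G) :
    HasExpGrowth fun s z ↦ F s z + G s z := by
  obtain ⟨a, ha, hFa⟩ := hF.bound
  obtain ⟨b, hb, hGb⟩ := hG.bound
  refine of_abs_le_mul_exp (C := 2) (a := a + b)
    (fun s hs ↦ (hF.continuous hs).add (hG.continuous hs)) fun s hs z ↦ ?_
  have : 0 ≤ 1 + s + ‖z‖ := by positivity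
  calc |F s z + G s z| ≤ |F s z| + |G s z| := abs_add_le _ _
    _ ≤ exp (a * (1 + s + ‖z‖)) + exp (b * (1 + s + ‖z‖)) := add_le_add (hFa hs z) (hGb hs z)
    _ ≤ exp ((a + b) * (1 + s + ‖z‖)) + exp ((a + b) * (1 + s + ‖z‖)) := by
      gcongr <;> linarith
    _ = 2 * exp ((a + b) * (1 + s + ‖z‖)) := by ring

lemma mul (hF : HasExpGrowth F) (hG : HasExpGrowth G) :
    HasExpGrowth fun s z ↦ F s z * G s z := by
  obtain ⟨a, ha, hFa⟩ := hF.bound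
  obtain ⟨b, hb, hGb⟩ := hG.bound
  refine ⟨fun s hs ↦ (hF.continuous hs).mul (hG.continuous hs), a + b, by positivity,
    fun s hs z ↦ ?_⟩
  rw [abs_mul, add_mul, exp_add]
  exact mul_le_mul (hFa hs z) (hGb hs z) (abs_nonneg _) (exp_pos _).le

lemma neg (hF : HasExpGrowth F) : HasExpGrowth fun s z ↦ -F s z := by
  simpa only [neg_one_mul] using (const (-1)).mul hF

lemma sub (hF : HasExpGrowth F) (hG : HasExpGrowth G) :
    HasExpGrowth fun s z ↦ F s z - G s z := by
  simpa only [sub_eq_add_neg] using hF.add hG.neg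

lemma pow (hF : HasExpGrowth F) (k : ℕ) : HasExpGrowth fun s z ↦ F s z ^ k := by
  induction k with
  | zero => simpa only [pow_zero] using const 1
  | succ k ih => simpa only [pow_succ] using ih.mul hF

lemma sum {κ : Type*} (t : Finset κ) {F : κ → ℝ → V → ℝ} (hF : ∀ k, HasExpGrowth (F k)) :
    HasExpGrowth fun s z ↦ ∑ k ∈ t, F k s z := by
  classical
  induction t using Finset.induction_on with
  | empty => simpa only [Finset.sum_empty] using const 0
  | insert k t hk ih => simpa only [Finset.sum_insert hk] using (hF k).add ih

lemma log (hF : HasExpGrowth F) (hinv : HasExpGrowth fun s z ↦ (F s z)⁻¹)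
    (hpos : ∀ ⦃s⦄, 0 < s → ∀ z, 0 < F s z) : HasExpGrowth fun s z ↦ Real.log (F s z) := by
  obtain ⟨a, ha, h⟩ := (hF.add hinv).bound
  refine ⟨fun s hs ↦ (hF.continuous hs).log fun z ↦ (hpos hs z).ne', a, ha, fun s hs z ↦ ?_⟩
  have hFz := hpos hs z
  have hinvz := inv_pos.2 hFz
  have hlog := log_le_sub_one_of_pos hFz
  have hlog_inv := log_le_sub_one_of_pos hinvz
  rw [log_inv] at hlog_inv
  exact (abs_le.2 ⟨by linarith, by linarith⟩).trans ((le_abs_self _).trans (h hs z))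

lemma inner {W : Type*} [NormedAddCommGroup W] [InnerProductSpace ℝ W] (v : W) :
    HasExpGrowth fun _ (z : W) ↦ ⟪v, z⟫ := by
  obtain ⟨a, ha, h⟩ := ((const (V := W) ‖v‖).mul norm).bound
  refine ⟨fun _ _ ↦ by fun_prop, a, ha, fun s hs z ↦ le_trans ?_ (h hs z)⟩
  exact (abs_real_inner_le_norm v z).trans (le_abs_self _)

end HasExpGrowth

end ExpGrowth

section HeatOperator

variable {V : Type*} [NormedAddCommGroup V] [NormedSpace ℝ V] {ι : Type*} [Fintype ι]

/-- `F` has growth-controlled first and second derivatives `G i`, `H i` along the vectors `b i`, and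
`A = ∂ₛF + ∑ i, H i`: when `b` is an orthonormal basis, `A` is the image of `F` under the backward
heat operator `∂ₛ + Δ`. The time derivative is encoded as `A - ∑ i, H i`, so that `A = 0` for
solutions of the backward heat equation. -/
structure HasHeatOperator (b : ι → V) (F A : ℝ → V → ℝ) (G H : ι → ℝ → V → ℝ) : Prop where
  growth : HasExpGrowth F
  growth_heat : HasExpGrowth A
  growth_fst : ∀ i, HasExpGrowth (G i)
  growth_snd : ∀ i, HasExpGrowth (H i)
  time : ∀ ⦃s⦄, 0 < s → ∀ z, HasDerivAt (F · z) (A s z - ∑ i, H i s z) s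
  fst : ∀ i ⦃s⦄, 0 < s → ∀ z, HasLineDerivAt ℝ (F s) (G i s z) z (b i)
  snd : ∀ i ⦃s⦄, 0 < s → ∀ z, HasLineDerivAt ℝ (G i s) (H i s z) z (b i)

lemma hasLineDerivAt_mul {f g : V → ℝ} {f' g' : ℝ} {z v : V}
    (hf : HasLineDerivAt ℝ f f' z v) (hg : HasLineDerivAt ℝ g g' z v) :
    HasLineDerivAt ℝ (fun z ↦ f z * g z) (f' * g z + f z * g') z v := by
  simpa only [HasLineDerivAt, zero_smul, add_zero] using HasDerivAt.fun_mul hf hg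

lemma hasLineDerivAt_comp {φ : ℝ → ℝ} {f : V → ℝ} {φ' f' : ℝ} {z v : V}
    (hφ : HasDerivAt φ φ' (f z)) (hf : HasLineDerivAt ℝ f f' z v) :
    HasLineDerivAt ℝ (fun z ↦ φ (f z)) (φ' * f') z v :=
  HasDerivAt.comp_of_eq (0 : ℝ) hφ hf (by simp only [zero_smul, add_zero])

namespace HasHeatOperator

variable {b : ι → V} {F A F' A' : ℝ → V → ℝ} {G H G' H' : ι → ℝ → V → ℝ}

lemma mul (h : HasHeatOperator b F A G H) (h' : HasHeatOperator b F' A' G' H') :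
    HasHeatOperator b (fun s z ↦ F s z * F' s z)
      (fun s z ↦ A s z * F' s z + F s z * A' s z + 2 * ∑ i, G i s z * G' i s z)
      (fun i s z ↦ G i s z * F' s z + F s z * G' i s z)
      (fun i s z ↦ H i s z * F' s z + 2 * (G i s z * G' i s z) + F s z * H' i s z) where
  growth := h.growth.mul h'.growth
  growth_heat := ((h.growth_heat.mul h'.growth).add (h.growth.mul h'.growth_heat)).add
    ((HasExpGrowth.const 2).mul <|
      HasExpGrowth.sum _ fun i ↦ (h.growth_fst i).mul (h'.growth_fst i))
  growth_fst i := ((h.growth_fst i).mul h'.growth).add (h.growth.mul (h'.growth_fst i))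
  growth_snd i := (((h.growth_snd i).mul h'.growth).add
    ((HasExpGrowth.const 2).mul ((h.growth_fst i).mul (h'.growth_fst i)))).add
    (h.growth.mul (h'.growth_snd i))
  time s hs z := by
    refine ((h.time hs z).fun_mul (h'.time hs z)).congr_deriv ?_
    simp only [Finset.sum_add_distrib, ← Finset.mul_sum, ← Finset.sum_mul]
    ring
  fst i s hs z := hasLineDerivAt_mul (h.fst i hs z) (h'.fst i hs z)
  snd i s hs z := by
    refine HasDerivAt.congr_deriv (HasDerivAt.fun_add
      (hasLineDerivAt_mul (h.snd i hs z) (h'.fst i hs z))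
      (hasLineDerivAt_mul (h.fst i hs z) (h'.snd i hs z))) ?_
    ring

lemma comp (h : HasHeatOperator b F A G H) {φ φ' φ'' : ℝ → ℝ}
    (hφ : ∀ ⦃s⦄, 0 < s → ∀ z, HasDerivAt φ (φ' (F s z)) (F s z))
    (hφ' : ∀ ⦃s⦄, 0 < s → ∀ z, HasDerivAt φ' (φ'' (F s z)) (F s z))
    (hg : HasExpGrowth fun s z ↦ φ (F s z)) (hg' : HasExpGrowth fun s z ↦ φ' (F s z))
    (hg'' : HasExpGrowth fun s z ↦ φ'' (F s z)) :
    HasHeatOperator b (fun s z ↦ φ (F s z))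
      (fun s z ↦ φ' (F s z) * A s z + φ'' (F s z) * ∑ i, G i s z ^ 2)
      (fun i s z ↦ φ' (F s z) * G i s z)
      (fun i s z ↦ φ'' (F s z) * G i s z ^ 2 + φ' (F s z) * H i s z) where
  growth := hg
  growth_heat := (hg'.mul h.growth_heat).add
    (hg''.mul <| HasExpGrowth.sum _ fun i ↦ (h.growth_fst i).pow 2)
  growth_fst i := hg'.mul (h.growth_fst i)
  growth_snd i := (hg''.mul ((h.growth_fst i).pow 2)).add (hg'.mul (h.growth_snd i))
  time s hs z := by
    refine ((hφ hs z).comp s (h.time hs z)).congr_deriv ?_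
    simp only [Finset.sum_add_distrib, ← Finset.mul_sum]
    ring
  fst i s hs z := hasLineDerivAt_comp (hφ hs z) (h.fst i hs z)
  snd i s hs z := by
    convert! hasLineDerivAt_mul (hasLineDerivAt_comp (hφ' hs z) (h.fst i hs z)) (h.snd i hs z)
      using 1
    ring

lemma sum {κ : Type*} (t : Finset κ) {F A : κ → ℝ → V → ℝ} {G H : κ → ι → ℝ → V → ℝ}
    (h : ∀ k, HasHeatOperator b (F k) (A k) (G k) (H k)) :
    HasHeatOperator b (fun s z ↦ ∑ k ∈ t, F k s z) (fun s z ↦ ∑ k ∈ t, A k s z)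
      (fun i s z ↦ ∑ k ∈ t, G k i s z) (fun i s z ↦ ∑ k ∈ t, H k i s z) where
  growth := HasExpGrowth.sum t fun k ↦ (h k).growth
  growth_heat := HasExpGrowth.sum t fun k ↦ (h k).growth_heat
  growth_fst i := HasExpGrowth.sum t fun k ↦ (h k).growth_fst i
  growth_snd i := HasExpGrowth.sum t fun k ↦ (h k).growth_snd i
  time s hs z := by
    refine (HasDerivAt.fun_sum fun k _ ↦ (h k).time hs z).congr_deriv ?_
    rw [Finset.sum_sub_distrib, Finset.sum_comm]
  fst i _ hs z := HasDerivAt.fun_sum fun k _ ↦ (h k).fst i hs z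
  snd i _ hs z := HasDerivAt.fun_sum fun k _ ↦ (h k).snd i hs z

variable {u v : ℝ → V → ℝ}

lemma mul_log (hv : HasHeatOperator b v (fun _ _ ↦ 0) G H)
    (hpos : ∀ ⦃s⦄, 0 < s → ∀ z, 0 < v s z) (hinv : HasExpGrowth fun s z ↦ (v s z)⁻¹) :
    HasHeatOperator b (fun s z ↦ v s z * log (v s z)) (fun s z ↦ ∑ i, G i s z ^ 2 / v s z)
      (fun i s z ↦ (log (v s z) + 1) * G i s z)
      (fun i s z ↦ (v s z)⁻¹ * G i s z ^ 2 + (log (v s z) + 1) * H i s z) := by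
  have hlog := hv.growth.log hinv hpos
  convert! hv.comp (φ := fun x ↦ x * log x) (φ' := fun x ↦ log x + 1) (φ'' := (·⁻¹))
    (fun s hs z ↦ hasDerivAt_mul_log (hpos hs z).ne')
    (fun s hs z ↦ (hasDerivAt_log (hpos hs z).ne').add_const 1)
    (hv.growth.mul hlog) (hlog.add (HasExpGrowth.const 1)) hinv using 3 with s z
  rw [mul_zero, zero_add, ← Finset.sum_div, div_eq_inv_mul]

lemma inv (hv : HasHeatOperator b v (fun _ _ ↦ 0) G H)
    (hpos : ∀ ⦃s⦄, 0 < s → ∀ z, 0 < v s z) (hinv : HasExpGrowth fun s z ↦ (v s z)⁻¹) :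
    HasHeatOperator b (fun s z ↦ (v s z)⁻¹) (fun s z ↦ 2 * (v s z)⁻¹ ^ 3 * ∑ i, G i s z ^ 2)
      (fun i s z ↦ -(v s z)⁻¹ ^ 2 * G i s z)
      (fun i s z ↦ 2 * (v s z)⁻¹ ^ 3 * G i s z ^ 2 + -(v s z)⁻¹ ^ 2 * H i s z) := by
  convert! hv.comp (φ := (·⁻¹)) (φ' := fun x ↦ -x⁻¹ ^ 2) (φ'' := fun x ↦ 2 * x⁻¹ ^ 3)
    (fun s hs z ↦ by simpa only [inv_pow] using hasDerivAt_inv (hpos hs z).ne')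
    (fun s hs z ↦ ?_) hinv (hinv.pow 2).neg ((HasExpGrowth.const 2).mul (hinv.pow 3))
    using 3 with s z
  · rw [mul_zero, zero_add]
  · have hz := (hpos hs z).ne'
    refine ((hasDerivAt_inv hz).fun_pow 2).fun_neg.congr_deriv ?_
    ring

lemma sq_div (hu : HasHeatOperator b u (fun _ _ ↦ 0) G' H')
    (hv : HasHeatOperator b v (fun _ _ ↦ 0) G H)
    (hpos : ∀ ⦃s⦄, 0 < s → ∀ z, 0 < v s z) (hinv : HasExpGrowth fun s z ↦ (v s z)⁻¹) :
    ∃ K L, HasHeatOperator b (fun s z ↦ u s z ^ 2 / v s z)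
      (fun s z ↦ 2 * (v s z * ∑ i, (G' i s z / v s z - u s z * G i s z / v s z ^ 2) ^ 2)) K L := by
  have h := (hu.mul hu).mul (hv.inv hpos hinv)
  have hF : (fun s z ↦ u s z * u s z * (v s z)⁻¹) = fun s z ↦ u s z ^ 2 / v s z := by
    ext s z
    rw [div_eq_mul_inv, pow_two]
  rw [hF] at h
  have hA (s z) : (0 * u s z + u s z * 0 + 2 * ∑ i, G' i s z * G' i s z) * (v s z)⁻¹
        + u s z * u s z * (2 * (v s z)⁻¹ ^ 3 * ∑ i, G i s z ^ 2)
        + 2 * ∑ i, (G' i s z * u s z + u s z * G' i s z) * (-(v s z)⁻¹ ^ 2 * G i s z)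
      = 2 * (v s z * ∑ i, (G' i s z / v s z - u s z * G i s z / v s z ^ 2) ^ 2) := by
    have hcancel : v s z * (v s z)⁻¹ ^ 2 = (v s z)⁻¹ := by
      simpa only [inv_inv, pow_two, mul_assoc] using inv_mul_mul_self (v s z)⁻¹
    rw [zero_mul, mul_zero, add_zero, zero_add]
    simp only [div_eq_mul_inv, ← inv_pow, Finset.mul_sum, Finset.sum_mul, ← Finset.sum_add_distrib]
    refine Finset.sum_congr rfl fun i _ ↦ ?_
    linear_combination (-2 * (G' i s z - u s z * G i s z * (v s z)⁻¹) ^ 2) * hcancel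
  exact ⟨_, _, funext₂ hA ▸ h⟩

end HasHeatOperator

end HeatOperator

section HeatKernel

variable {V : Type*} [NormedAddCommGroup V] [InnerProductSpace ℝ V]

/-- The fundamental solution of `∂ₜ = Δ`, i.e. the density of the centred Gaussian with covariance
`2 t` times the identity. -/
noncomputable def heatKernel (t : ℝ) (x : V) : ℝ :=
  (4 * π * t) ^ (-(finrank ℝ V : ℝ) / 2) * exp (-‖x‖ ^ 2 / (4 * t))

lemma heatKernel_pos {t : ℝ} (ht : 0 < t) (x : V) : 0 < heatKernel t x := by
  unfold heatKernel
  positivity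

lemma continuous_heatKernel (t : ℝ) : Continuous (heatKernel t : V → ℝ) := by
  unfold heatKernel
  fun_prop

lemma heatKernel_le {a r c : ℝ} (ha : 0 < a) (har : a ≤ r) (hrc : r ≤ c) (x : V) :
    heatKernel r x ≤ (a / c) ^ (-(finrank ℝ V : ℝ) / 2) * heatKernel c x := by
  have hr := ha.trans_le har
  have hc := hr.trans_le hrc
  have hn : -(finrank ℝ V : ℝ) / 2 ≤ 0 := by
    linarith [(finrank ℝ V).cast_nonneg (α := ℝ)]
  unfold heatKernel
  rw [← mul_assoc, ← mul_rpow (by positivity) (by positivity),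
    show a / c * (4 * π * c) = 4 * π * a by field_simp]
  have hpow := rpow_le_rpow_of_nonpos (by positivity) (by gcongr : 4 * π * a ≤ 4 * π * r) hn
  have hexp : -‖x‖ ^ 2 / (4 * r) ≤ -‖x‖ ^ 2 / (4 * c) := by
    rw [neg_div, neg_div, neg_le_neg_iff]
    gcongr
  gcongr

lemma hasLineDerivAt_heatKernel (t : ℝ) (x v : V) :
    HasLineDerivAt ℝ (heatKernel t) (heatKernel t x * (-(⟪v, x⟫ / (2 * t)))) x v := by
  have hline : HasDerivAt (fun r : ℝ ↦ x + r • v) v 0 := by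
    simpa only [one_smul] using ((hasDerivAt_id' (0 : ℝ)).smul_const v).const_add x
  refine (((hline.norm_sq.fun_neg.div_const (4 * t)).exp).const_mul _).congr_deriv ?_
  rw [zero_smul, add_zero, real_inner_comm, heatKernel]
  ring

lemma hasDerivAt_heatKernel {t : ℝ} (ht : 0 < t) (x : V) :
    HasDerivAt (heatKernel · x)
      (heatKernel t x * (‖x‖ ^ 2 / (4 * t ^ 2) - finrank ℝ V / (2 * t))) t := by
  have hpow : HasDerivAt (fun t ↦ (4 * π * t) ^ (-(finrank ℝ V : ℝ) / 2))
      (4 * π * (-(finrank ℝ V : ℝ) / 2) * (4 * π * t) ^ (-(finrank ℝ V : ℝ) / 2 - 1)) t := by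
    simpa only [mul_one] using ((hasDerivAt_id' t).const_mul (4 * π)).rpow_const
      (p := -(finrank ℝ V : ℝ) / 2) (Or.inl (by positivity))
  have hquot : HasDerivAt (fun t : ℝ ↦ -‖x‖ ^ 2 / (4 * t)) (‖x‖ ^ 2 / (4 * t ^ 2)) t := by
    refine ((hasDerivAt_const t (-‖x‖ ^ 2)).fun_div ((hasDerivAt_id' t).const_mul 4)
      (by positivity)).congr_deriv ?_
    field_simp
    ring
  refine (hpow.mul hquot.exp).congr_deriv ?_
  rw [rpow_sub_one (by positivity), heatKernel]
  field_simp
  ring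

lemma exists_abs_deriv_heatKernel_mul_le {F F' : ℝ → V → ℝ} (hF : HasExpGrowth F)
    (hF' : HasExpGrowth F') {s : ℝ} (hs : 0 < s) :
    ∃ C a, ∀ ⦃r⦄, r ∈ Set.Ioo (s / 2) (2 * s) → ∀ z,
      |heatKernel r z * ((‖z‖ ^ 2 / (4 * r ^ 2) - finrank ℝ V / (2 * r)) * F r z + F' r z)|
        ≤ C * (heatKernel (2 * s) z * exp (a * ‖z‖)) := by
  obtain ⟨a, ha, hbound⟩ := (((((HasExpGrowth.norm.pow 2).mul (.const (1 / s ^ 2))).add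
    (.const (finrank ℝ V / s))).mul hF.abs).add hF'.abs).bound
  refine ⟨(s / 2 / (2 * s)) ^ (-(finrank ℝ V : ℝ) / 2) * exp (a * (1 + 2 * s)), a,
    fun r hr z ↦ ?_⟩
  have hr0 : 0 < r := (half_pos hs).trans hr.1
  have hrate : |‖z‖ ^ 2 / (4 * r ^ 2) - finrank ℝ V / (2 * r)|
      ≤ ‖z‖ ^ 2 * (1 / s ^ 2) + finrank ℝ V / s := by
    refine (abs_sub _ _).trans ?_
    rw [abs_of_nonneg (by positivity), abs_of_nonneg (by positivity), mul_one_div]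
    gcongr
    · nlinarith [hr.1]
    · linarith [hr.1]
  have hfactor : |(‖z‖ ^ 2 / (4 * r ^ 2) - finrank ℝ V / (2 * r)) * F r z + F' r z|
      ≤ exp (a * (1 + 2 * s) + a * ‖z‖) :=
    calc _ ≤ (‖z‖ ^ 2 * (1 / s ^ 2) + finrank ℝ V / s) * |F r z| + |F' r z| := by
          refine (abs_add_le _ _).trans ?_
          rw [abs_mul]
          gcongr
      _ ≤ exp (a * (1 + r + ‖z‖)) := (le_abs_self _).trans (hbound hr0 z)
      _ ≤ exp (a * (1 + 2 * s) + a * ‖z‖) := by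
          rw [← mul_add]
          gcongr
          exact hr.2.le
  rw [abs_mul, abs_of_pos (heatKernel_pos hr0 z)]
  have hkernel := heatKernel_le (half_pos hs) hr.1.le hr.2.le z
  refine (mul_le_mul hkernel hfactor (abs_nonneg _)
    ((heatKernel_pos hr0 z).le.trans hkernel)).trans_eq ?_
  rw [exp_add]
  ring

variable [FiniteDimensional ℝ V] [MeasurableSpace V] [BorelSpace V]

lemma integral_heatKernel {t : ℝ} (ht : 0 < t) : ∫ x : V, heatKernel t x = 1 := by
  have hexp (x : V) : exp (-‖x‖ ^ 2 / (4 * t)) = exp (-(1 / (4 * t)) * ‖x‖ ^ 2) := by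
    congr 1
    ring
  simp only [heatKernel, hexp, integral_const_mul]
  rw [GaussianFourier.integral_rexp_neg_mul_sq_norm (by positivity), div_div_eq_mul_div, div_one,
    show π * (4 * t) = 4 * π * t by ring, ← rpow_add (by positivity), neg_div, neg_add_cancel,
    rpow_zero]

lemma integrable_heatKernel {t : ℝ} (ht : 0 < t) : Integrable (heatKernel t : V → ℝ) :=
  .of_integral_ne_zero (by simp [integral_heatKernel ht])

lemma integrable_heatKernel_mul_exp {t : ℝ} (ht : 0 < t) (a : ℝ) :
    Integrable fun x : V ↦ heatKernel t x * exp (a * ‖x‖) := by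
  have hcont := continuous_heatKernel (V := V) t
  refine ((integrable_heatKernel (V := V) (t := 2 * t) (by positivity)).const_mul
    ((t / (2 * t)) ^ (-(finrank ℝ V : ℝ) / 2) * exp (2 * t * a ^ 2))).mono'
    (by fun_prop) (ae_of_all _ fun x ↦ ?_)
  rw [norm_eq_abs, abs_of_pos (mul_pos (heatKernel_pos ht x) (exp_pos _))]
  unfold heatKernel
  have hsq : -‖x‖ ^ 2 / (4 * t) + a * ‖x‖ ≤ 2 * t * a ^ 2 + -‖x‖ ^ 2 / (4 * (2 * t)) := by
    have : 2 * t * a ^ 2 + -‖x‖ ^ 2 / (4 * (2 * t)) - (-‖x‖ ^ 2 / (4 * t) + a * ‖x‖)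
        = (4 * t * a - ‖x‖) ^ 2 / (8 * t) := by
      field_simp
      ring
    linarith [show 0 ≤ (4 * t * a - ‖x‖) ^ 2 / (8 * t) by positivity]
  calc (4 * π * t) ^ (-(finrank ℝ V : ℝ) / 2) * exp (-‖x‖ ^ 2 / (4 * t)) * exp (a * ‖x‖)
      = (t / (2 * t) * (4 * π * (2 * t))) ^ (-(finrank ℝ V : ℝ) / 2)
          * exp (-‖x‖ ^ 2 / (4 * t) + a * ‖x‖) := by
        rw [exp_add, mul_assoc, show t / (2 * t) * (4 * π * (2 * t)) = 4 * π * t by field_simp]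
    _ ≤ (t / (2 * t) * (4 * π * (2 * t))) ^ (-(finrank ℝ V : ℝ) / 2)
          * exp (2 * t * a ^ 2 + -‖x‖ ^ 2 / (4 * (2 * t))) := by gcongr
    _ = (t / (2 * t)) ^ (-(finrank ℝ V : ℝ) / 2) * exp (2 * t * a ^ 2)
          * ((4 * π * (2 * t)) ^ (-(finrank ℝ V : ℝ) / 2) * exp (-‖x‖ ^ 2 / (4 * (2 * t)))) := by
        rw [exp_add, mul_rpow (by positivity) (by positivity)]
        ring

lemma HasExpGrowth.integrable_heatKernel_mul {F : ℝ → V → ℝ} (hF : HasExpGrowth F) {s : ℝ}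
    (hs : 0 < s) : Integrable fun z ↦ heatKernel s z * F s z := by
  obtain ⟨a, -, hFa⟩ := hF.bound
  refine ((integrable_heatKernel_mul_exp hs a).mul_const (exp (a * (1 + s)))).mono'
    ((continuous_heatKernel s).mul (hF.continuous hs)).aestronglyMeasurable (ae_of_all _ fun z ↦ ?_)
  rw [norm_eq_abs, abs_mul, abs_of_pos (heatKernel_pos hs z), mul_assoc, ← exp_add, add_comm,
    ← mul_add]
  exact mul_le_mul_of_nonneg_left (hFa hs z) (heatKernel_pos hs z).le

lemma hasDerivAt_integral_heatKernel_mul {F F' : ℝ → V → ℝ} (hF : HasExpGrowth F)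
    (hF' : HasExpGrowth F') (hd : ∀ ⦃s⦄, 0 < s → ∀ z, HasDerivAt (F · z) (F' s z) s)
    {s : ℝ} (hs : 0 < s) :
    HasDerivAt (fun s ↦ ∫ z, heatKernel s z * F s z)
      (∫ z, heatKernel s z * ((‖z‖ ^ 2 / (4 * s ^ 2) - finrank ℝ V / (2 * s)) * F s z + F' s z))
      s := by
  obtain ⟨C, a, hbound⟩ := exists_abs_deriv_heatKernel_mul_le hF hF' hs
  refine (hasDerivAt_integral_of_dominated_loc_of_deriv_le (s := Set.Ioo (s / 2) (2 * s))
    (F' := fun r z ↦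
      heatKernel r z * ((‖z‖ ^ 2 / (4 * r ^ 2) - finrank ℝ V / (2 * r)) * F r z + F' r z))
    (Ioo_mem_nhds (by linarith) (by linarith)) ?_ (hF.integrable_heatKernel_mul hs) ?_
    (ae_of_all _ fun z r hr ↦ hbound hr z)
    ((integrable_heatKernel_mul_exp (t := 2 * s) (by positivity) a).const_mul C)
    (ae_of_all _ fun z r hr ↦ ?_)).2
  · filter_upwards [lt_mem_nhds hs] with r hr
    exact ((continuous_heatKernel r).mul (hF.continuous hr)).aestronglyMeasurable
  · have := continuous_heatKernel (V := V) s
    have := hF.continuous hs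
    have := hF'.continuous hs
    exact Continuous.aestronglyMeasurable (by fun_prop)
  · have hr0 : 0 < r := (half_pos hs).trans hr.1
    refine ((hasDerivAt_heatKernel hr0 z).fun_mul (hd hr0 z)).congr_deriv ?_
    ring

lemma integral_heatKernel_mul_add {F G : ℝ → V → ℝ} (hF : HasExpGrowth F) (hG : HasExpGrowth G)
    {s : ℝ} (hs : 0 < s) :
    ∫ z, heatKernel s z * (F s z + G s z) =
      (∫ z, heatKernel s z * F s z) + ∫ z, heatKernel s z * G s z := by
  simp only [mul_add]
  exact integral_add (hF.integrable_heatKernel_mul hs) (hG.integrable_heatKernel_mul hs)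

lemma integral_heatKernel_mul_sum {κ : Type*} (t : Finset κ) {F : κ → ℝ → V → ℝ}
    (hF : ∀ k, HasExpGrowth (F k)) {s : ℝ} (hs : 0 < s) :
    ∫ z, heatKernel s z * ∑ k ∈ t, F k s z = ∑ k ∈ t, ∫ z, heatKernel s z * F k s z := by
  simp only [Finset.mul_sum]
  exact integral_finsetSum t fun k _ ↦ (hF k).integrable_heatKernel_mul hs

-- Stein's identity.
lemma integral_heatKernel_mul_inner_mul {F F' : ℝ → V → ℝ} (hF : HasExpGrowth F)
    (hF' : HasExpGrowth F') {s : ℝ} (hs : 0 < s) {v : V}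
    (hd : ∀ z, HasLineDerivAt ℝ (F s) (F' s z) z v) :
    ∫ z, heatKernel s z * (⟪v, z⟫ * F s z) = 2 * s * ∫ z, heatKernel s z * F' s z := by
  have hparts := integral_bilinear_hasLineDerivAt_right_eq_neg_left_of_integrable
    (μ := volume) (B := ContinuousLinearMap.mul ℝ ℝ) (g := F s) (g' := F' s)
    (f := heatKernel s) (f' := fun z ↦ heatKernel s z * (-(⟪v, z⟫ / (2 * s)))) (v := v)
    ?_ (hF'.integrable_heatKernel_mul hs) (hF.integrable_heatKernel_mul hs)
    (fun z _ ↦ hasLineDerivAt_heatKernel s z v) (fun z _ ↦ hd z)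
  · simp only [ContinuousLinearMap.mul_apply'] at hparts
    rw [hparts, mul_neg, ← integral_const_mul, ← integral_neg]
    congr with z
    field_simp
  · convert! (((HasExpGrowth.inner v).mul hF).mul
      (.const (-(1 / (2 * s))))).integrable_heatKernel_mul hs using 2 with z
    simp only [ContinuousLinearMap.mul_apply']
    ring

namespace HasHeatOperator

variable {ι : Type*} [Fintype ι] {b : OrthonormalBasis ι ℝ V} {F A : ℝ → V → ℝ}
  {G H : ι → ℝ → V → ℝ}

lemma integral_heatKernel_mul_norm_sq_mul (h : HasHeatOperator b F A G H) {s : ℝ} (hs : 0 < s) :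
    ∫ z, heatKernel s z * (‖z‖ ^ 2 * F s z) =
      2 * s * finrank ℝ V * (∫ z, heatKernel s z * F s z)
        + 4 * s ^ 2 * ∫ z, heatKernel s z * ∑ i, H i s z := by
  have hcoord (i : ι) : ∫ z, heatKernel s z * (⟪b i, z⟫ ^ 2 * F s z) =
      2 * s * (∫ z, heatKernel s z * F s z) + 4 * s ^ 2 * ∫ z, heatKernel s z * H i s z := by
    have hinner := HasExpGrowth.inner (b i)
    have hlin (z : V) : HasLineDerivAt ℝ (fun z ↦ ⟪b i, z⟫) 1 z (b i) := by
      simpa [HasLineDerivAt, inner_add_right, inner_smul_right] using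
        (hasDerivAt_id' (0 : ℝ)).const_add ⟪b i, z⟫
    have hmixed := integral_heatKernel_mul_inner_mul (hinner.mul h.growth)
      (((HasExpGrowth.const 1).mul h.growth).add (hinner.mul (h.growth_fst i))) hs
      fun z ↦ hasLineDerivAt_mul (hlin z) (h.fst i hs z)
    rw [integral_heatKernel_mul_add ((HasExpGrowth.const 1).mul h.growth)
      (hinner.mul (h.growth_fst i)) hs, integral_heatKernel_mul_inner_mul (h.growth_fst i)
      (h.growth_snd i) hs (h.snd i hs)] at hmixed
    simp only [pow_two, mul_assoc, one_mul] at hmixed ⊢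
    rw [hmixed]
    ring
  have hcard : (Fintype.card ι : ℝ) = finrank ℝ V := by rw [finrank_eq_card_basis b.toBasis]
  simp only [← b.sum_sq_inner_right, Finset.sum_mul]
  rw [integral_heatKernel_mul_sum _ (fun i ↦ ((HasExpGrowth.inner (b i)).pow 2).mul h.growth) hs,
    integral_heatKernel_mul_sum _ h.growth_snd hs]
  simp only [hcoord, Finset.sum_add_distrib, Finset.sum_const, Finset.card_univ, nsmul_eq_mul,
    hcard, ← Finset.mul_sum]
  ring

theorem hasDerivAt_integral_heatKernel (h : HasHeatOperator b F A G H) {s : ℝ} (hs : 0 < s) :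
    HasDerivAt (fun s ↦ ∫ z, heatKernel s z * F s z) (∫ z, heatKernel s z * A s z) s := by
  have hlap : HasExpGrowth fun s z ↦ ∑ i, H i s z := .sum _ h.growth_snd
  refine (hasDerivAt_integral_heatKernel_mul h.growth (h.growth_heat.sub hlap) h.time
    hs).congr_deriv ?_
  have hmoment := h.integral_heatKernel_mul_norm_sq_mul hs
  have hsplit (z : V) : heatKernel s z * ((‖z‖ ^ 2 / (4 * s ^ 2) - finrank ℝ V / (2 * s)) * F s z
        + (A s z - ∑ i, H i s z))
      = 1 / (4 * s ^ 2) * (heatKernel s z * (‖z‖ ^ 2 * F s z))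
        - finrank ℝ V / (2 * s) * (heatKernel s z * F s z) + heatKernel s z * A s z
        - heatKernel s z * ∑ i, H i s z := by ring
  have hnorm := ((HasExpGrowth.norm.pow 2).mul h.growth).integrable_heatKernel_mul hs
  have hF := h.growth.integrable_heatKernel_mul hs
  have hA := h.growth_heat.integrable_heatKernel_mul hs
  simp only [hsplit]
  rw [integral_sub (((hnorm.const_mul _).sub' (hF.const_mul _)).fun_add hA)
      (hlap.integrable_heatKernel_mul hs),
    integral_add ((hnorm.const_mul _).sub' (hF.const_mul _)) hA,
    integral_sub (hnorm.const_mul _) (hF.const_mul _), integral_const_mul, integral_const_mul,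
    hmoment]
  field_simp
  ring

end HasHeatOperator

end HeatKernel

section CauchySchwarz

lemma sq_integral_mul_le_integral_mul_sq {α : Type*} [MeasurableSpace α] {μ : Measure α}
    {ρ T : α → ℝ} (hρ : ∀ x, 0 ≤ ρ x) (hρ_one : ∫ x, ρ x ∂μ = 1)
    (hρT : Integrable (fun x ↦ ρ x * T x) μ) (hρT_sq : Integrable (fun x ↦ ρ x * T x ^ 2) μ) :
    (∫ x, ρ x * T x ∂μ) ^ 2 ≤ ∫ x, ρ x * T x ^ 2 ∂μ := by
  set m := ∫ x, ρ x * T x ∂μ with hm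
  have hρ_int : Integrable ρ μ := .of_integral_ne_zero (by simp [hρ_one])
  have hvar : ∫ x, ρ x * (T x - m) ^ 2 ∂μ = (∫ x, ρ x * T x ^ 2 ∂μ) - m ^ 2 := by
    have hsplit (x : α) : ρ x * (T x - m) ^ 2
        = ρ x * T x ^ 2 - 2 * m * (ρ x * T x) + m ^ 2 * ρ x := by ring
    simp only [hsplit]
    rw [integral_add (hρT_sq.sub' (hρT.const_mul _)) (hρ_int.const_mul _),
      integral_sub hρT_sq (hρT.const_mul _), integral_const_mul, integral_const_mul, ← hm, hρ_one]
    ring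
  have hnonneg : 0 ≤ ∫ x, ρ x * (T x - m) ^ 2 ∂μ :=
    integral_nonneg fun x ↦ mul_nonneg (hρ x) (sq_nonneg _)
  linarith

lemma sq_sum_diag_le_card_mul_sum_sq {ι : Type*} [Fintype ι] (a : ι → ι → ℝ) :
    (∑ i, a i i) ^ 2 ≤ Fintype.card ι * ∑ i, ∑ j, a i j ^ 2 :=
  (sq_sum_le_card_mul_sum_sq (s := Finset.univ)).trans <| by
    rw [Finset.card_univ]
    gcongr with i
    exact Finset.single_le_sum (f := fun j ↦ a i j ^ 2) (fun j _ ↦ sq_nonneg _) (Finset.mem_univ i)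

end CauchySchwarz

section CaloricEntropy

variable {V : Type*} [NormedAddCommGroup V] {ι : Type*} {v : ℝ → V → ℝ} {G : ι → ℝ → V → ℝ}
  {K : ι → ι → ℝ → V → ℝ}

/-- The second derivatives `∂ᵢ∂ⱼ log v` of the logarithm of a function `v` with first derivatives
`G i` and second derivatives `K i j`. -/
noncomputable def logHessian (v : ℝ → V → ℝ) (G : ι → ℝ → V → ℝ) (K : ι → ι → ℝ → V → ℝ)
    (i j : ι) (s : ℝ) (z : V) : ℝ :=
  K i j s z / v s z - G i s z * G j s z / v s z ^ 2

lemma hasExpGrowth_logHessian (hG : ∀ i, HasExpGrowth (G i)) (hK : ∀ i j, HasExpGrowth (K i j))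
    (hinv : HasExpGrowth fun s z ↦ (v s z)⁻¹) (i j : ι) :
    HasExpGrowth (logHessian v G K i j) := by
  unfold logHessian
  simp only [div_eq_mul_inv, ← inv_pow]
  exact ((hK i j).mul hinv).sub (((hG i).mul (hG j)).mul (hinv.pow 2))

variable [InnerProductSpace ℝ V] [FiniteDimensional ℝ V] [MeasurableSpace V] [BorelSpace V]
  [Fintype ι]

lemma HasHeatOperator.hasDerivAt_integral_heatKernel_mul_sum_sq_div
    {b : OrthonormalBasis ι ℝ V} {H : ι → ℝ → V → ℝ} {L : ι → ι → ℝ → V → ℝ}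
    (hv : HasHeatOperator b v (fun _ _ ↦ 0) G H)
    (hG : ∀ i, HasHeatOperator b (G i) (fun _ _ ↦ 0) (K i) (L i))
    (hpos : ∀ ⦃s⦄, 0 < s → ∀ z, 0 < v s z) (hinv : HasExpGrowth fun s z ↦ (v s z)⁻¹)
    {s : ℝ} (hs : 0 < s) :
    HasDerivAt (fun s ↦ ∫ z, heatKernel s z * ∑ i, G i s z ^ 2 / v s z)
      (∫ z, heatKernel s z * ∑ i, 2 * (v s z * ∑ j, logHessian v G K i j s z ^ 2)) s := by
  choose P Q hPQ using fun i ↦ (hG i).sq_div hv hpos hinv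
  exact (HasHeatOperator.sum Finset.univ hPQ).hasDerivAt_integral_heatKernel hs

lemma integral_heatKernel_mul_laplacian_log (hG : ∀ i, HasExpGrowth (G i))
    (hK : ∀ i j, HasExpGrowth (K i j)) (hpos : ∀ ⦃s⦄, 0 < s → ∀ z, 0 < v s z)
    (hinv : HasExpGrowth fun s z ↦ (v s z)⁻¹) {s : ℝ} (hs : 0 < s) :
    ∫ z, heatKernel s z * v s z * ∑ i, logHessian v G K i i s z =
      (∫ z, heatKernel s z * ∑ i, K i i s z)
        - ∫ z, heatKernel s z * ∑ i, G i s z ^ 2 / v s z := by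
  have hquot : HasExpGrowth fun s z ↦ ∑ i, G i s z ^ 2 / v s z := by
    simp only [div_eq_mul_inv]
    exact .sum _ fun i ↦ ((hG i).pow 2).mul hinv
  rw [← integral_sub ((HasExpGrowth.sum _ fun i ↦ hK i i).integrable_heatKernel_mul hs)
    (hquot.integrable_heatKernel_mul hs)]
  congr with z
  have hz := (hpos hs z).ne'
  rw [mul_assoc, ← mul_sub, ← Finset.sum_sub_distrib, Finset.mul_sum]
  congr! 2 with i
  simp only [logHessian]
  field_simp

-- Cauchy–Schwarz, first for the probability density `γ v` applied to `Δ log v`, and then for the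
-- trace of the Hessian of `log v`.
lemma sq_integral_laplacian_sub_le (hv : HasExpGrowth v) (hG : ∀ i, HasExpGrowth (G i))
    (hK : ∀ i j, HasExpGrowth (K i j)) (hpos : ∀ ⦃s⦄, 0 < s → ∀ z, 0 < v s z)
    (hinv : HasExpGrowth fun s z ↦ (v s z)⁻¹) {s : ℝ} (hs : 0 < s)
    (hmass : ∫ z, heatKernel s z * v s z = 1) :
    ((∫ z, heatKernel s z * ∑ i, K i i s z)
        - ∫ z, heatKernel s z * ∑ i, G i s z ^ 2 / v s z) ^ 2 ≤
      Fintype.card ι / 2 *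
        ∫ z, heatKernel s z * ∑ i, 2 * (v s z * ∑ j, logHessian v G K i j s z ^ 2) := by
  have hhess := hasExpGrowth_logHessian hG hK hinv
  have htrace : HasExpGrowth fun s z ↦ ∑ i, logHessian v G K i i s z := .sum _ fun i ↦ hhess i i
  have hdensity (z : V) : 0 ≤ heatKernel s z * v s z :=
    (mul_pos (heatKernel_pos hs z) (hpos hs z)).le
  have hint : Integrable fun z ↦
      heatKernel s z * v s z * (∑ i, logHessian v G K i i s z) ^ 2 := by
    simpa only [mul_assoc] using (hv.mul (htrace.pow 2)).integrable_heatKernel_mul hs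
  rw [← integral_heatKernel_mul_laplacian_log hG hK hpos hinv hs, ← integral_const_mul]
  refine (sq_integral_mul_le_integral_mul_sq hdensity hmass ?_ hint).trans
    (integral_mono hint ?_ fun z ↦ ?_)
  · simpa only [mul_assoc] using (hv.mul htrace).integrable_heatKernel_mul hs
  · exact ((HasExpGrowth.sum Finset.univ fun i ↦ (HasExpGrowth.const 2).mul (hv.mul
      (.sum Finset.univ fun j ↦ (hhess i j).pow 2))).integrable_heatKernel_mul hs).const_mul _
  · have hcs := mul_le_mul_of_nonneg_left
      (sq_sum_diag_le_card_mul_sum_sq fun i j ↦ logHessian v G K i j s z) (hdensity z)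
    refine hcs.trans_eq ?_
    simp only [← Finset.mul_sum]
    ring

end CaloricEntropy

section TimeInversion

lemma hasDerivAt_one_div_four_mul {t : ℝ} (ht : 0 < t) :
    HasDerivAt (fun t : ℝ ↦ 1 / (4 * t)) (-(1 / (4 * t ^ 2))) t := by
  refine ((hasDerivAt_const t 1).fun_div ((hasDerivAt_id' t).const_mul 4)
    (by positivity)).congr_deriv ?_
  field_simp
  norm_num

variable {n m : ℝ} {h L L₁ L₂ : ℝ → ℝ}

lemma hasDerivAt_of_time_inversion (hL : ∀ ⦃s⦄, 0 < s → HasDerivAt L (L₁ s) s)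
    (hh : ∀ ⦃t⦄, 0 < t → h t = n / 2 * log (4 * π * t) + n / 2 + m / (4 * t) - L (1 / (4 * t)))
    {t : ℝ} (ht : 0 < t) :
    HasDerivAt h (n / (2 * t) - (m - L₁ (1 / (4 * t))) / (4 * t ^ 2)) t := by
  have hinv := hasDerivAt_one_div_four_mul ht
  have hlog : HasDerivAt (fun t ↦ log (4 * π * t)) (1 / t) t := by
    refine (((hasDerivAt_id' t).const_mul (4 * π)).log (by positivity)).congr_deriv ?_
    field_simp
  have hderiv := (((hlog.const_mul (n / 2)).add_const (n / 2)).fun_add (hinv.const_mul m)).fun_sub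
    ((hL (by positivity : 0 < 1 / (4 * t))).comp t hinv)
  refine (hderiv.congr_of_eventuallyEq ?_).congr_deriv (by field_simp; ring)
  filter_upwards [lt_mem_nhds ht] with r hr
  rw [hh hr, mul_one_div, comp_apply]

lemma hasDerivAt_deriv_of_time_inversion (hL₁ : ∀ ⦃s⦄, 0 < s → HasDerivAt L₁ (L₂ s) s)
    {t : ℝ} (ht : 0 < t) :
    HasDerivAt (fun t ↦ n / (2 * t) - (m - L₁ (1 / (4 * t))) / (4 * t ^ 2))
      (-(n / (2 * t ^ 2)) + (m - L₁ (1 / (4 * t))) / (2 * t ^ 3) - L₂ (1 / (4 * t)) / (16 * t ^ 4))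
      t := by
  have hinv := hasDerivAt_one_div_four_mul ht
  have hL₁_inv := (hL₁ (by positivity : 0 < 1 / (4 * t))).comp t hinv
  have hderiv := (hinv.const_mul (2 * n)).fun_sub
    ((hL₁_inv.const_sub m).fun_mul ((hinv.fun_pow 2).const_mul 4))
  refine (hderiv.congr_of_eventuallyEq ?_).congr_deriv ?_
  · filter_upwards [lt_mem_nhds ht] with r hr
    rw [comp_apply]
    field_simp
    ring
  · simp only [comp_apply, Nat.add_one_sub_one, pow_one, Nat.cast_ofNat]
    field_simp
    ring

lemma second_deriv_add_sq_deriv_nonpos_of_time_inversion (hn : 0 < n)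
    (hL : ∀ ⦃s⦄, 0 < s → HasDerivAt L (L₁ s) s) (hL₁ : ∀ ⦃s⦄, 0 < s → HasDerivAt L₁ (L₂ s) s)
    (hcs : ∀ ⦃s⦄, 0 < s → (m - L₁ s) ^ 2 ≤ n / 2 * L₂ s)
    (hh : ∀ ⦃t⦄, 0 < t → h t = n / 2 * log (4 * π * t) + n / 2 + m / (4 * t) - L (1 / (4 * t)))
    {t : ℝ} (ht : 0 < t) :
    DifferentiableAt ℝ h t ∧ DifferentiableAt ℝ (deriv h) t ∧
      deriv (deriv h) t + 2 / n * deriv h t ^ 2 ≤ 0 := by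
  have hderiv := hasDerivAt_of_time_inversion hL hh ht
  have hderiv₂ := (hasDerivAt_deriv_of_time_inversion (n := n) (m := m) hL₁
    ht).congr_of_eventuallyEq (f₁ := deriv h) <| by
      filter_upwards [lt_mem_nhds ht] with r hr
      exact (hasDerivAt_of_time_inversion hL hh hr).deriv
  refine ⟨hderiv.differentiableAt, hderiv₂.differentiableAt, ?_⟩
  rw [hderiv₂.deriv, hderiv.deriv]
  have hsquare (a b : ℝ) : -(n / (2 * t ^ 2)) + (m - a) / (2 * t ^ 3) - b / (16 * t ^ 4)
      + 2 / n * (n / (2 * t) - (m - a) / (4 * t ^ 2)) ^ 2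
        = 1 / (8 * n * t ^ 4) * ((m - a) ^ 2 - n / 2 * b) := by
    field_simp
    ring
  rw [hsquare]
  exact mul_nonpos_of_nonneg_of_nonpos (by positivity)
    (sub_nonpos.2 (hcs (by positivity)))

end TimeInversion

section TiltedMoments

variable {V : Type*} [NormedAddCommGroup V] [InnerProductSpace ℝ V]

lemma continuous_prod_inner (l : List V) : Continuous fun y ↦ (l.map fun v ↦ ⟪v, y⟫).prod :=
  continuous_list_prod l fun v _ ↦ by fun_prop

lemma inner_sub_mul_norm_sq_le {R s : ℝ} (hs : 0 < s) (z : V) {y : V} (hy : ‖y‖ ≤ R) :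
    ⟪z, y⟫ - s * ‖y‖ ^ 2 ≤ R * ‖z‖ := by
  calc ⟪z, y⟫ - s * ‖y‖ ^ 2 ≤ ⟪z, y⟫ := sub_le_self _ (by positivity)
    _ ≤ ‖z‖ * ‖y‖ := real_inner_le_norm z y
    _ ≤ R * ‖z‖ := by
      rw [mul_comm]
      gcongr

lemma heatKernel_mul_exp_tilt {s : ℝ} (hs : 0 < s) (z y : V) :
    heatKernel s z * exp (⟪z, y⟫ - s * ‖y‖ ^ 2) = heatKernel s (z - (2 * s) • y) := by
  rw [heatKernel, heatKernel, mul_assoc, ← exp_add, norm_sub_sq_real, inner_smul_right, norm_smul,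
    norm_of_nonneg (by positivity : 0 ≤ 2 * s)]
  congr 2
  field_simp
  ring

variable [FiniteDimensional ℝ V] [MeasurableSpace V] [BorelSpace V] {μ : Measure V} {R : ℝ}

lemma integrable_of_continuous_of_ae_norm_le [IsFiniteMeasure μ] (hμ : ∀ᵐ y ∂μ, ‖y‖ ≤ R)
    {f : V → ℝ} (hf : Continuous f) : Integrable f μ := by
  obtain ⟨C, hC⟩ := (isCompact_closedBall (0 : V) R).exists_bound_of_continuousOn hf.continuousOn
  exact .of_bound hf.aestronglyMeasurable C
    (hμ.mono fun y hy ↦ hC y (mem_closedBall_zero_iff.2 hy))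

lemma hasDerivAt_integral_of_continuous_of_ae_norm_le [IsFiniteMeasure μ]
    (hμ : ∀ᵐ y ∂μ, ‖y‖ ≤ R) {f f' : ℝ → V → ℝ} (hf : ∀ r, Continuous (f r))
    (hf' : Continuous (uncurry f')) (hd : ∀ r y, HasDerivAt (f · y) (f' r y) r) (r₀ : ℝ) :
    HasDerivAt (fun r ↦ ∫ y, f r y ∂μ) (∫ y, f' r₀ y ∂μ) r₀ := by
  have hcompact : IsCompact (Set.Icc (r₀ - 1) (r₀ + 1) ×ˢ closedBall (0 : V) R) :=
    isCompact_Icc.prod (isCompact_closedBall 0 R)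
  obtain ⟨C, hC⟩ := hcompact.exists_bound_of_continuousOn hf'.continuousOn
  exact (hasDerivAt_integral_of_dominated_loc_of_deriv_le (bound := fun _ ↦ C)
    (Icc_mem_nhds (by linarith : r₀ - 1 < r₀) (by linarith : r₀ < r₀ + 1))
    (.of_forall fun r ↦ (hf r).aestronglyMeasurable)
    (integrable_of_continuous_of_ae_norm_le hμ (hf r₀))
    (hf'.comp (.prodMk_right r₀)).aestronglyMeasurable
    (hμ.mono fun y hy r hr ↦ hC (r, y) ⟨hr, mem_closedBall_zero_iff.2 hy⟩)
    (integrable_const C) (ae_of_all _ fun y r _ ↦ hd r y)).2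

lemma continuous_integral_of_continuous_of_ae_norm_le [IsFiniteMeasure μ]
    (hμ : ∀ᵐ y ∂μ, ‖y‖ ≤ R) {f : V → V → ℝ} (hf : Continuous (uncurry f)) :
    Continuous fun z ↦ ∫ y, f z y ∂μ := by
  have hrestrict : μ.restrict (closedBall 0 R) = μ :=
    Measure.restrict_eq_self_of_ae_mem (hμ.mono fun y hy ↦ mem_closedBall_zero_iff.2 hy)
  rw [← hrestrict]
  exact continuous_parametric_integral_of_continuous hf (isCompact_closedBall 0 R)

/-- The mixed moment `∫ ∏ ⟪v, y⟫` over `v ∈ l` of the measure `μ` tilted by the solution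
`exp (⟪z, y⟫ - s * ‖y‖ ^ 2)` of the backward heat equation in `(s, z)`. -/
noncomputable def tiltedMoment (μ : Measure V) (l : List V) (s : ℝ) (z : V) : ℝ :=
  ∫ y, exp (⟪z, y⟫ - s * ‖y‖ ^ 2) * (l.map fun v ↦ ⟪v, y⟫).prod ∂μ

variable [IsFiniteMeasure μ]

lemma hasExpGrowth_tiltedMoment (hμ : ∀ᵐ y ∂μ, ‖y‖ ≤ R) (l : List V) :
    HasExpGrowth (tiltedMoment μ l) := by
  have hprod := continuous_prod_inner l
  obtain ⟨C, hC⟩ := (isCompact_closedBall (0 : V) R).exists_bound_of_continuousOn hprod.continuousOn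
  refine .of_abs_le_mul_exp (C := |C| * μ.real Set.univ) (a := |R|)
    (fun s _ ↦ continuous_integral_of_continuous_of_ae_norm_le hμ (by fun_prop)) fun s hs z ↦ ?_
  have hbound : ∀ᵐ y ∂μ, ‖exp (⟪z, y⟫ - s * ‖y‖ ^ 2) * (l.map fun v ↦ ⟪v, y⟫).prod‖
      ≤ exp (|R| * (1 + s + ‖z‖)) * |C| := hμ.mono fun y hy ↦ by
    have htilt := inner_sub_mul_norm_sq_le hs z (hy.trans (le_abs_self R))
    rw [norm_mul, norm_of_nonneg (exp_pos _).le]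
    gcongr
    · refine htilt.trans ?_
      gcongr
      linarith
    · exact (hC y (mem_closedBall_zero_iff.2 hy)).trans (le_abs_self C)
  calc |tiltedMoment μ l s z| ≤ exp (|R| * (1 + s + ‖z‖)) * |C| * μ.real Set.univ :=
        norm_integral_le_of_norm_le_const hbound
    _ = |C| * μ.real Set.univ * exp (|R| * (1 + s + ‖z‖)) := by ring

lemma hasLineDerivAt_tiltedMoment (hμ : ∀ᵐ y ∂μ, ‖y‖ ≤ R) (l : List V) (s : ℝ) (z v : V) :
    HasLineDerivAt ℝ (tiltedMoment μ l s) (tiltedMoment μ (v :: l) s z) z v := by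
  have := continuous_prod_inner l
  have hderiv := hasDerivAt_integral_of_continuous_of_ae_norm_le hμ
    (f := fun r y ↦ exp (⟪z + r • v, y⟫ - s * ‖y‖ ^ 2) * (l.map fun v ↦ ⟪v, y⟫).prod)
    (f' := fun r y ↦ exp (⟪z + r • v, y⟫ - s * ‖y‖ ^ 2) * ((v :: l).map fun v ↦ ⟪v, y⟫).prod)
    (fun r ↦ by fun_prop) (by simp only [List.map_cons, List.prod_cons]; fun_prop)
    (fun r y ↦ ?_) 0
  · simpa only [HasLineDerivAt, tiltedMoment, zero_smul, add_zero] using hderiv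
  · have hinner : HasDerivAt (fun r : ℝ ↦ ⟪z + r • v, y⟫ - s * ‖y‖ ^ 2) ⟪v, y⟫ r := by
      simp only [inner_add_left, inner_smul_left, conj_trivial]
      simpa only [one_mul] using (((hasDerivAt_id' r).mul_const ⟪v, y⟫).const_add _).sub_const _
    refine (hinner.exp.mul_const _).congr_deriv ?_
    rw [List.map_cons, List.prod_cons, mul_assoc]

variable {ι : Type*} [Fintype ι] (b : OrthonormalBasis ι ℝ V)

lemma hasDerivAt_tiltedMoment (hμ : ∀ᵐ y ∂μ, ‖y‖ ≤ R) (l : List V) (s : ℝ) (z : V) :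
    HasDerivAt (tiltedMoment μ l · z) (-∑ i, tiltedMoment μ (b i :: b i :: l) s z) s := by
  have := continuous_prod_inner l
  have hderiv := hasDerivAt_integral_of_continuous_of_ae_norm_le hμ
    (f := fun s y ↦ exp (⟪z, y⟫ - s * ‖y‖ ^ 2) * (l.map fun v ↦ ⟪v, y⟫).prod)
    (f' := fun s y ↦ exp (⟪z, y⟫ - s * ‖y‖ ^ 2) * -‖y‖ ^ 2 * (l.map fun v ↦ ⟪v, y⟫).prod)
    (fun s ↦ by fun_prop) (by fun_prop) (fun s y ↦ ?_) s
  · refine hderiv.congr_deriv ?_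
    have hint (i : ι) : Integrable (fun y ↦ exp (⟪z, y⟫ - s * ‖y‖ ^ 2)
        * ((b i :: b i :: l).map fun v ↦ ⟪v, y⟫).prod) μ :=
      integrable_of_continuous_of_ae_norm_le hμ
        (by simp only [List.map_cons, List.prod_cons]; fun_prop)
    simp only [tiltedMoment]
    rw [← integral_finsetSum _ fun i _ ↦ hint i, ← integral_neg]
    congr with y
    simp only [List.map_cons, List.prod_cons, ← b.sum_sq_inner_right y, Finset.mul_sum,
      Finset.sum_mul, mul_neg, neg_mul, ← Finset.sum_neg_distrib]
    congr with i
    ring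
  · refine ((((hasDerivAt_id' s).mul_const (‖y‖ ^ 2)).const_sub ⟪z, y⟫).exp.mul_const
      _).congr_deriv ?_
    rw [one_mul]

lemma hasHeatOperator_tiltedMoment (hμ : ∀ᵐ y ∂μ, ‖y‖ ≤ R) (l : List V) :
    HasHeatOperator b (tiltedMoment μ l) (fun _ _ ↦ 0) (fun i ↦ tiltedMoment μ (b i :: l))
      (fun i ↦ tiltedMoment μ (b i :: b i :: l)) where
  growth := hasExpGrowth_tiltedMoment hμ l
  growth_heat := .const 0
  growth_fst _ := hasExpGrowth_tiltedMoment hμ _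
  growth_snd _ := hasExpGrowth_tiltedMoment hμ _
  time s _ z := by simpa only [zero_sub] using hasDerivAt_tiltedMoment b hμ l s z
  fst i s _ z := hasLineDerivAt_tiltedMoment hμ l s z (b i)
  snd i s _ z := hasLineDerivAt_tiltedMoment hμ _ s z (b i)

lemma integral_heatKernel_mul_tiltedMoment (hμ : ∀ᵐ y ∂μ, ‖y‖ ≤ R) (l : List V) {s : ℝ}
    (hs : 0 < s) :
    ∫ z, heatKernel s z * tiltedMoment μ l s z = ∫ y, (l.map fun v ↦ ⟪v, y⟫).prod ∂μ := by
  have hkernel := continuous_heatKernel (V := V) s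
  have hprod := continuous_prod_inner l
  have hint : Integrable (uncurry fun z y ↦ heatKernel s z *
      (exp (⟪z, y⟫ - s * ‖y‖ ^ 2) * (l.map fun v ↦ ⟪v, y⟫).prod)) (volume.prod μ) := by
    refine ((integrable_heatKernel_mul_exp hs R).mul_prod
      (integrable_of_continuous_of_ae_norm_le hμ hprod.norm)).mono'
      (Continuous.aestronglyMeasurable (by fun_prop)) ?_
    filter_upwards [Measure.quasiMeasurePreserving_snd.ae hμ] with ⟨z, y⟩ hy
    rw [uncurry_apply_pair, norm_mul, norm_mul, norm_of_nonneg (heatKernel_pos hs z).le,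
      norm_of_nonneg (exp_pos _).le, ← mul_assoc]
    have := (heatKernel_pos hs z).le
    gcongr
    exact inner_sub_mul_norm_sq_le hs z hy
  calc ∫ z, heatKernel s z * tiltedMoment μ l s z
      = ∫ z, ∫ y, heatKernel s z *
          (exp (⟪z, y⟫ - s * ‖y‖ ^ 2) * (l.map fun v ↦ ⟪v, y⟫).prod) ∂μ := by
        simp only [tiltedMoment, integral_const_mul]
    _ = ∫ y, (∫ z, heatKernel s z *
          (exp (⟪z, y⟫ - s * ‖y‖ ^ 2) * (l.map fun v ↦ ⟪v, y⟫).prod)) ∂μ :=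
        integral_integral_swap hint
    _ = ∫ y, (l.map fun v ↦ ⟪v, y⟫).prod ∂μ := by
        congr with y
        simp only [← mul_assoc, heatKernel_mul_exp_tilt hs]
        rw [integral_mul_const, integral_sub_right_eq_self (heatKernel s), integral_heatKernel hs,
          one_mul]

lemma integral_heatKernel_mul_sum_tiltedMoment (hμ : ∀ᵐ y ∂μ, ‖y‖ ≤ R) {s : ℝ} (hs : 0 < s) :
    ∫ z, heatKernel s z * ∑ i, tiltedMoment μ [b i, b i] s z = ∫ y, ‖y‖ ^ 2 ∂μ := by
  have hint (i : ι) : Integrable (fun y ↦ ([b i, b i].map fun v ↦ ⟪v, y⟫).prod) μ :=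
    integrable_of_continuous_of_ae_norm_le hμ (continuous_prod_inner _)
  rw [integral_heatKernel_mul_sum _ (fun i ↦ hasExpGrowth_tiltedMoment hμ _) hs]
  simp only [integral_heatKernel_mul_tiltedMoment hμ _ hs]
  rw [← integral_finsetSum _ fun i _ ↦ hint i]
  simp only [List.map_cons, List.map_nil, List.prod_cons, List.prod_nil, mul_one, ← pow_two,
    b.sum_sq_inner_right]

end TiltedMoments

section Partition

variable {V : Type*} [NormedAddCommGroup V] [InnerProductSpace ℝ V] [FiniteDimensional ℝ V]
  [MeasurableSpace V] [BorelSpace V] {μ : Measure V} [IsProbabilityMeasure μ] {R : ℝ}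

lemma integral_heatKernel_mul_tiltedMoment_nil (hμ : ∀ᵐ y ∂μ, ‖y‖ ≤ R) {s : ℝ} (hs : 0 < s) :
    ∫ z, heatKernel s z * tiltedMoment μ [] s z = 1 := by
  simp [integral_heatKernel_mul_tiltedMoment hμ [] hs]

lemma integral_heatKernel_mul_norm_sq_mul_tiltedMoment_nil (hμ : ∀ᵐ y ∂μ, ‖y‖ ≤ R) {s : ℝ}
    (hs : 0 < s) :
    ∫ z, heatKernel s z * (‖z‖ ^ 2 * tiltedMoment μ [] s z) =
      2 * s * finrank ℝ V + 4 * s ^ 2 * ∫ y, ‖y‖ ^ 2 ∂μ := by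
  have hop := hasHeatOperator_tiltedMoment (stdOrthonormalBasis ℝ V) hμ []
  rw [hop.integral_heatKernel_mul_norm_sq_mul hs, integral_heatKernel_mul_tiltedMoment_nil hμ hs,
    mul_one, integral_heatKernel_mul_sum_tiltedMoment _ hμ hs]

lemma exp_le_tiltedMoment_nil (hμ : ∀ᵐ y ∂μ, ‖y‖ ≤ R) {s : ℝ} (hs : 0 < s) (z : V) :
    exp (-(R * ‖z‖ + s * R ^ 2)) ≤ tiltedMoment μ [] s z := by
  simp only [tiltedMoment, List.map_nil, List.prod_nil, mul_one]
  calc exp (-(R * ‖z‖ + s * R ^ 2)) = ∫ _, exp (-(R * ‖z‖ + s * R ^ 2)) ∂μ := by simp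
    _ ≤ ∫ y, exp (⟪z, y⟫ - s * ‖y‖ ^ 2) ∂μ := by
      refine integral_mono_ae (integrable_const _)
        (integrable_of_continuous_of_ae_norm_le hμ (by fun_prop)) (hμ.mono fun y hy ↦ ?_)
      have hinner : -(R * ‖z‖) ≤ ⟪z, y⟫ := by
        refine (abs_le.1 ((abs_real_inner_le_norm z y).trans ?_)).1
        rw [mul_comm]
        gcongr
      have hnorm : s * ‖y‖ ^ 2 ≤ s * R ^ 2 := by gcongr
      exact exp_le_exp.2 (by linarith)

lemma tiltedMoment_nil_pos (hμ : ∀ᵐ y ∂μ, ‖y‖ ≤ R) ⦃s : ℝ⦄ (hs : 0 < s) (z : V) :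
    0 < tiltedMoment μ [] s z :=
  (exp_pos _).trans_le (exp_le_tiltedMoment_nil hμ hs z)

lemma hasExpGrowth_inv_tiltedMoment_nil (hμ : ∀ᵐ y ∂μ, ‖y‖ ≤ R) :
    HasExpGrowth fun s z ↦ (tiltedMoment μ [] s z)⁻¹ := by
  refine .of_abs_le_mul_exp (C := 1) (a := |R| + R ^ 2) (fun s hs ↦
    ((hasExpGrowth_tiltedMoment hμ []).continuous hs).inv₀ fun z ↦
      (tiltedMoment_nil_pos hμ hs z).ne') fun s hs z ↦ ?_
  rw [abs_of_pos (inv_pos.2 (tiltedMoment_nil_pos hμ hs z)), one_mul]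
  refine (inv_anti₀ (exp_pos _) (exp_le_tiltedMoment_nil hμ hs z)).trans ?_
  rw [← exp_neg, neg_neg, exp_le_exp]
  have hlin : R * ‖z‖ ≤ |R| * (1 + s + ‖z‖) := by
    gcongr
    · exact le_abs_self R
    · linarith
  have hsq : s * R ^ 2 ≤ R ^ 2 * (1 + s + ‖z‖) := by
    rw [mul_comm]
    gcongr
    linarith [norm_nonneg z]
  linarith

end Partition

section HeatFlow

variable {V : Type*} [NormedAddCommGroup V] [InnerProductSpace ℝ V]

lemma heatKernel_smul {c s : ℝ} (hc : 0 < c) (hs : 0 < s) (x : V) :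
    c ^ finrank ℝ V * heatKernel (c ^ 2 * s) (c • x) = heatKernel s x := by
  have hpow : c ^ finrank ℝ V * (c ^ 2) ^ (-(finrank ℝ V : ℝ) / 2) = 1 := by
    rw [← rpow_natCast c 2, ← rpow_mul hc.le, ← rpow_natCast c (finrank ℝ V), ← rpow_add hc]
    simp [mul_div_cancel₀]
  rw [heatKernel, heatKernel, norm_smul, norm_of_nonneg hc.le, mul_pow,
    show 4 * π * (c ^ 2 * s) = c ^ 2 * (4 * π * s) by ring,
    mul_rpow (by positivity) (by positivity), ← mul_assoc, ← mul_assoc, hpow, one_mul]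
  congr 2
  field_simp

lemma log_heatKernel {s : ℝ} (hs : 0 < s) (z : V) :
    log (heatKernel s z) = -(finrank ℝ V / 2 * log (4 * π * s)) - ‖z‖ ^ 2 / (4 * s) := by
  rw [heatKernel, log_mul (by positivity) (exp_ne_zero _), log_exp, log_rpow (by positivity)]
  ring

variable [MeasurableSpace V]

/-- The density at time `t` of the solution of `∂ₜ = Δ` with initial datum the measure `μ`. -/
noncomputable def heatFlow (μ : Measure V) (t : ℝ) (x : V) : ℝ :=
  ∫ y, heatKernel t (x - y) ∂μ

lemma heatFlow_smul (μ : Measure V) {t : ℝ} (ht : 0 < t) (z : V) :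
    (2 * t) ^ finrank ℝ V * heatFlow μ t ((2 * t) • z) =
      heatKernel (1 / (4 * t)) z * tiltedMoment μ [] (1 / (4 * t)) z := by
  simp only [heatFlow, tiltedMoment, List.map_nil, List.prod_nil, mul_one, ← integral_const_mul]
  congr with y
  have hs : 0 < 1 / (4 * t) := by positivity
  rw [heatKernel_mul_exp_tilt hs, ← heatKernel_smul (c := 2 * t) (by positivity) hs, smul_sub,
    smul_smul, show 2 * t * (2 * (1 / (4 * t))) = 1 by field_simp; norm_num, one_smul,
    show (2 * t) ^ 2 * (1 / (4 * t)) = t by field_simp; norm_num]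

variable [FiniteDimensional ℝ V] [BorelSpace V]

/-- The Boltzmann–Shannon entropy of a density `p`. -/
noncomputable def differentialEntropy (p : V → ℝ) : ℝ :=
  -∫ x, p x * log (p x)

lemma differentialEntropy_eq_of_comp_smul (p : V → ℝ) {c : ℝ} (hc : 0 < c) :
    differentialEntropy p = -∫ z, c ^ finrank ℝ V * p (c • z) * log (p (c • z)) := by
  simp only [mul_assoc, integral_const_mul]
  rw [differentialEntropy, Measure.integral_comp_smul volume fun x ↦ p x * log (p x),
    abs_of_pos (by positivity), smul_eq_mul, mul_inv_cancel_left₀ (by positivity)]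

variable {μ : Measure V} [IsProbabilityMeasure μ] {R : ℝ}

lemma log_heatFlow_smul (hμ : ∀ᵐ y ∂μ, ‖y‖ ≤ R) {t : ℝ} (ht : 0 < t) (z : V) :
    log (heatFlow μ t ((2 * t) • z)) = -(finrank ℝ V / 2 * log (4 * π * t)) - t * ‖z‖ ^ 2
      + log (tiltedMoment μ [] (1 / (4 * t)) z) := by
  have hs : 0 < 1 / (4 * t) := by positivity
  have hlog := log_mul (heatKernel_pos hs z).ne' (tiltedMoment_nil_pos hμ hs z).ne'
  have hflow : heatFlow μ t ((2 * t) • z) ≠ 0 := right_ne_zero_of_mul <|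
    (heatFlow_smul μ ht z).trans_ne
      (mul_pos (heatKernel_pos hs z) (tiltedMoment_nil_pos hμ hs z)).ne'
  have hscale : log (4 * π * t) = 2 * log (2 * t) + log (4 * π * (1 / (4 * t))) := by
    rw [show 4 * π * t = (2 * t) ^ 2 * (4 * π * (1 / (4 * t))) by field_simp; norm_num,
      log_mul (by positivity) (by positivity), log_pow, Nat.cast_ofNat]
  rw [← heatFlow_smul μ ht, log_mul (by positivity) hflow, log_pow, log_heatKernel hs,
    show ‖z‖ ^ 2 / (4 * (1 / (4 * t))) = t * ‖z‖ ^ 2 by field_simp] at hlog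
  rw [hscale]
  linear_combination hlog

lemma differentialEntropy_heatFlow (hμ : ∀ᵐ y ∂μ, ‖y‖ ≤ R) {t : ℝ} (ht : 0 < t) :
    differentialEntropy (heatFlow μ t) = finrank ℝ V / 2 * log (4 * π * t) + finrank ℝ V / 2
      + (∫ y, ‖y‖ ^ 2 ∂μ) / (4 * t) - ∫ z, heatKernel (1 / (4 * t)) z *
        (tiltedMoment μ [] (1 / (4 * t)) z * log (tiltedMoment μ [] (1 / (4 * t)) z)) := by
  have hsplit (z : V) : (2 * t) ^ finrank ℝ V * heatFlow μ t ((2 * t) • z)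
        * log (heatFlow μ t ((2 * t) • z))
      = -(finrank ℝ V / 2 * log (4 * π * t))
          * (heatKernel (1 / (4 * t)) z * tiltedMoment μ [] (1 / (4 * t)) z)
        - t * (heatKernel (1 / (4 * t)) z * (‖z‖ ^ 2 * tiltedMoment μ [] (1 / (4 * t)) z))
        + heatKernel (1 / (4 * t)) z *
          (tiltedMoment μ [] (1 / (4 * t)) z * log (tiltedMoment μ [] (1 / (4 * t)) z)) := by
    rw [heatFlow_smul μ ht, log_heatFlow_smul hμ ht]
    ring
  have hs : 0 < 1 / (4 * t) := by positivity
  have hgrowth := hasExpGrowth_tiltedMoment hμ []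
  have hZ := hgrowth.integrable_heatKernel_mul hs
  have hZ_norm := ((HasExpGrowth.norm.pow 2).mul hgrowth).integrable_heatKernel_mul hs
  have hZ_log := (hgrowth.mul (hgrowth.log (hasExpGrowth_inv_tiltedMoment_nil hμ)
    (tiltedMoment_nil_pos hμ))).integrable_heatKernel_mul hs
  rw [differentialEntropy_eq_of_comp_smul _ (by positivity : 0 < 2 * t)]
  simp only [hsplit]
  rw [integral_add ((hZ.const_mul _).sub' (hZ_norm.const_mul _)) hZ_log,
    integral_sub (hZ.const_mul _) (hZ_norm.const_mul _), integral_const_mul, integral_const_mul,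
    integral_heatKernel_mul_norm_sq_mul_tiltedMoment_nil hμ hs,
    integral_heatKernel_mul_tiltedMoment_nil hμ hs]
  field_simp
  ring

theorem entropy_differential_inequality_general [Nontrivial V] (hμ : ∀ᵐ y ∂μ, ‖y‖ ≤ R) {t : ℝ}
    (ht : 0 < t) :
    DifferentiableAt ℝ (fun t ↦ differentialEntropy (heatFlow μ t)) t ∧
      DifferentiableAt ℝ (deriv fun t ↦ differentialEntropy (heatFlow μ t)) t ∧
      deriv (deriv fun t ↦ differentialEntropy (heatFlow μ t)) t
        + 2 / finrank ℝ V * deriv (fun t ↦ differentialEntropy (heatFlow μ t)) t ^ 2 ≤ 0 := by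
  set b := stdOrthonormalBasis ℝ V
  have hop := hasHeatOperator_tiltedMoment b hμ
  have hpos := tiltedMoment_nil_pos hμ
  have hinv := hasExpGrowth_inv_tiltedMoment_nil hμ
  refine second_deriv_add_sq_deriv_nonpos_of_time_inversion (Nat.cast_pos.2 finrank_pos)
    (fun s hs ↦ ((hop []).mul_log hpos hinv).hasDerivAt_integral_heatKernel hs)
    (fun s hs ↦ (hop []).hasDerivAt_integral_heatKernel_mul_sum_sq_div (fun i ↦ hop [b i])
      hpos hinv hs) (fun s hs ↦ ?_) (fun t ht ↦ differentialEntropy_heatFlow hμ ht) ht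
  rw [← integral_heatKernel_mul_sum_tiltedMoment b hμ hs]
  simpa only [Fintype.card_fin] using sq_integral_laplacian_sub_le (hop []).growth
    (hop []).growth_fst (K := fun i j ↦ tiltedMoment μ [b j, b i])
    (fun i j ↦ hasExpGrowth_tiltedMoment hμ _) hpos hinv hs
    (integral_heatKernel_mul_tiltedMoment_nil hμ hs)

end HeatFlow

section WithDensity

lemma isProbabilityMeasure_withDensity_ofReal {α : Type*} [MeasurableSpace α] {μ : Measure α}
    {f : α → ℝ} (hf : 0 ≤ᵐ[μ] f) (hint : ∫ x, f x ∂μ = 1) :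
    IsProbabilityMeasure (μ.withDensity fun x ↦ ENNReal.ofReal (f x)) := by
  have hf_int : Integrable f μ := .of_integral_ne_zero (by simp [hint])
  refine ⟨?_⟩
  rw [withDensity_apply _ .univ, Measure.restrict_univ,
    ← ofReal_integral_eq_lintegral_ofReal hf_int hf, hint,
    ENNReal.ofReal_one]

lemma exists_ae_withDensity_norm_le {V : Type*} [NormedAddCommGroup V] [MeasurableSpace V]
    [OpensMeasurableSpace V] {f : V → ℝ} (hf : Measurable f) (hsupp : HasCompactSupport f)
    (μ : Measure V) : ∃ R, ∀ᵐ y ∂μ.withDensity fun x ↦ ENNReal.ofReal (f x), ‖y‖ ≤ R := by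
  obtain ⟨R, hR⟩ := hsupp.isCompact.isBounded.exists_norm_le
  refine ⟨R, (ae_withDensity_iff hf.ennreal_ofReal).2 (ae_of_all _ fun y hy ↦ ?_)⟩
  exact hR y (subset_tsupport f fun hfy ↦ hy (by rw [hfy, ENNReal.ofReal_zero]))

lemma heatFlow_withDensity {n : ℕ} {f : EuclideanSpace ℝ (Fin n) → ℝ} (hf : Measurable f)
    (hf_nonneg : ∀ x, 0 ≤ f x) (t : ℝ) :
    heatFlow (volume.withDensity fun x ↦ ENNReal.ofReal (f x)) t = heatSol n f t := by
  ext x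
  rw [heatFlow, integral_withDensity_eq_integral_toReal_smul hf.ennreal_ofReal
    (ae_of_all _ fun _ ↦ ENNReal.ofReal_lt_top), heatSol]
  congr with y
  rw [ENNReal.toReal_ofReal (hf_nonneg y), smul_eq_mul, mul_comm, heatKernel,
    finrank_euclideanSpace_fin]

end WithDensity

/-- The entropy differential inequality `H'' + (2/n) H'² ≤ 0` along the heat flow on `ℝⁿ`:
the entropy is twice differentiable on `(0,∞)` and satisfies EDI(0,n). -/
theorem entropy_differential_inequality (n : ℕ) (hn : 1 ≤ n)
    (f : EuclideanSpace ℝ (Fin n) → ℝ)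
    (hf_cont : Continuous f) (hf_nonneg : ∀ x, 0 ≤ f x)
    (hf_supp : HasCompactSupport f)
    (hf_int : ∫ x, f x = 1) :
    ∀ t : ℝ, 0 < t →
      DifferentiableAt ℝ (shannonEntropy n f) t ∧
      DifferentiableAt ℝ (deriv (shannonEntropy n f)) t ∧
      deriv (deriv (shannonEntropy n f)) t
        + (2 / (n : ℝ)) * (deriv (shannonEntropy n f) t) ^ 2 ≤ 0 := by
  intro t ht
  set μ := volume.withDensity fun x ↦ ENNReal.ofReal (f x)
  have hentropy : shannonEntropy n f = fun t ↦ differentialEntropy (heatFlow μ t) :=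
    funext fun t ↦ by rw [heatFlow_withDensity hf_cont.measurable hf_nonneg]; rfl
  have : Nonempty (Fin n) := ⟨⟨0, hn⟩⟩
  have : IsProbabilityMeasure μ :=
    isProbabilityMeasure_withDensity_ofReal (ae_of_all _ hf_nonneg) hf_int
  obtain ⟨R, hR⟩ := exists_ae_withDensity_norm_le hf_cont.measurable hf_supp volume
  rw [hentropy]
  simpa only [finrank_euclideanSpace_fin] using entropy_differential_inequality_general hR ht
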